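/- arXiv:1805.03566 — 3 statements merged into one kernel-verified Lean document; each statement's English description precedes it below -/
import Mathlib

section
/- Let ν be a lattice path and let T, T' be ν-trees. Then T' can be obtained from T by a (possibly empty) finite sequence of right rotations if and only if b(T) ≤ b(T') componentwise. In particular, if T ≠ T' and T' is reachable from T by right rotations then b(T) < b(T') (componentwise ≤ with at least one strict inequality), and conversely. -/
open scoped Classical

/-! Lattice paths: `true` = north step, `false` = east step. -/

def eastSteps (ν : List Bool) : ℕ := ν.count false
def northSteps (ν : List Bool) : ℕ := ν.count true

/-- Height at which the path first reaches abscissa `x`. -/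
def heightAt : List Bool → ℕ → ℕ
  | _, 0 => 0
  | [], _ + 1 => 0
  | true :: rest, x + 1 => heightAt rest (x + 1) + 1
  | false :: rest, x + 1 => heightAt rest x

/-- Lattice point of a path after `i` steps. -/
def pointAt (μ : List Bool) (i : ℕ) : ℕ × ℕ :=
  ((μ.take i).count false, (μ.take i).count true)

/-- The set `A_ν` of lattice points weakly above `ν`. -/
def APts (ν : List Bool) : Set (ℕ × ℕ) :=
  {p | p.1 ≤ eastSteps ν ∧ heightAt ν p.1 ≤ p.2 ∧ p.2 ≤ northSteps ν}

def Incompatible (ν : List Bool) (p q : ℕ × ℕ) : Prop :=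
  (p.1 < q.1 ∧ p.2 < q.2 ∧ (q.1, p.2) ∈ APts ν) ∨
    (q.1 < p.1 ∧ q.2 < p.2 ∧ (p.1, q.2) ∈ APts ν)

def Compatible (ν : List Bool) (p q : ℕ × ℕ) : Prop := ¬ Incompatible ν p q

def IsNuTree (ν : List Bool) (T : Set (ℕ × ℕ)) : Prop :=
  T ⊆ APts ν ∧ T.Pairwise (Compatible ν) ∧
    ∀ T', T' ⊆ APts ν → T'.Pairwise (Compatible ν) → T ⊆ T' → T' = T

def IsRightRotationAt (T T' : Set (ℕ × ℕ)) (q q' : ℕ × ℕ) : Prop :=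
  ∃ x y x'' y', q = (x, y) ∧ q' = (x'', y') ∧ x < x'' ∧ y < y' ∧
    (x, y) ∈ T ∧ (x, y') ∈ T ∧ (x'', y) ∈ T ∧
    (∀ b, y < b → b < y' → (x, b) ∉ T) ∧
    (∀ a, x < a → a < x'' → (a, y) ∉ T) ∧
    (∀ a, x < a → a < x'' → (a, y') ∉ T) ∧
    (∀ b, y < b → b < y' → (x'', b) ∉ T) ∧
    T' = (T \ {(x, y)}) ∪ {(x'', y')}

def IsRightRotation (T T' : Set (ℕ × ℕ)) : Prop :=
  ∃ q q', IsRightRotationAt T T' q q'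

/-- Order relation of the rotation poset of ν-trees. -/
def TreeLE (ν : List Bool) : Set (ℕ × ℕ) → Set (ℕ × ℕ) → Prop :=
  Relation.ReflTransGen fun A B => IsNuTree ν A ∧ IsNuTree ν B ∧ IsRightRotation A B

def IsNuPath (ν μ : List Bool) : Prop :=
  eastSteps μ = eastSteps ν ∧ northSteps μ = northSteps ν ∧
    ∀ i ≤ μ.length, pointAt μ i ∈ APts ν

noncomputable def horiz (ν : List Bool) (p : ℕ × ℕ) : ℕ :=
  sSup {k | (p.1 + k, p.2) ∈ APts ν}

/-- Covering relation of the ν-Tamari lattice. -/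
def TamariCover (ν μ μ' : List Bool) : Prop :=
  IsNuPath ν μ ∧ IsNuPath ν μ' ∧
    ∃ i j, 0 < i ∧ i < j ∧ j ≤ μ.length ∧
      μ.getD (i - 1) true = false ∧ μ.getD i false = true ∧
      horiz ν (pointAt μ j) = horiz ν (pointAt μ i) ∧
      (∀ k, i < k → k < j → horiz ν (pointAt μ k) ≠ horiz ν (pointAt μ i)) ∧
      μ' = μ.take (i - 1) ++ (μ.drop i).take (j - i) ++ [false] ++ μ.drop j

def TamariLE (ν : List Bool) : List Bool → List Bool → Prop :=
  Relation.ReflTransGen (TamariCover ν)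

/-! Flushing maps -/

def rowAvail (ν : List Bool) (y : ℕ) : List ℕ :=
  ((List.range (eastSteps ν + 1)).filter fun x => decide (heightAt ν x ≤ y)).reverse

def pointsAtHeight (μ : List Bool) (y : ℕ) : ℕ :=
  ((List.range (μ.length + 1)).filter fun i => decide ((μ.take i).count true = y)).length

def rflushAux (ν : List Bool) : List ℕ → ℕ → List ℕ → List (ℕ × ℕ)
  | [], _, _ => []
  | c :: rest, y, forbidden =>
    let placed := ((rowAvail ν y).filter fun x => decide (x ∉ forbidden)).take c
    placed.map (fun x => (x, y)) ++ rflushAux ν rest (y + 1) (forbidden ++ placed.dropLast)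

/-- Right-flushing map `R`. -/
def Rflush (ν μ : List Bool) : Set (ℕ × ℕ) :=
  {p | p ∈ rflushAux ν ((List.range (northSteps ν + 1)).map (pointsAtHeight μ)) 0 []}

def lflushAux (m : ℕ) : List ℕ → ℕ → List ℕ → List (ℕ × ℕ)
  | [], _, _ => []
  | c :: rest, y, forbidden =>
    let placed := ((List.range (m + 1)).filter fun x => decide (x ∉ forbidden)).take c
    placed.map (fun x => (x, y)) ++ lflushAux m rest (y + 1) (forbidden ++ placed.dropLast)

noncomputable def rowCount (T : Set (ℕ × ℕ)) (y : ℕ) : ℕ := {x | (x, y) ∈ T}.ncard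

/-- Left-flushing map `L`. -/
noncomputable def Lflush (ν : List Bool) (T : Set (ℕ × ℕ)) : Set (ℕ × ℕ) :=
  {p | p ∈ lflushAux (eastSteps ν) ((List.range (northSteps ν + 1)).map (rowCount T)) 0 []}

def pathPointSet (μ : List Bool) : Set (ℕ × ℕ) := {p | ∃ i ≤ μ.length, pointAt μ i = p}

/-! Bracket vectors (0-indexed positions `0,…,ℓ`). -/

noncomputable def fpos (ν : List Bool) (k : ℕ) : ℕ :=
  sSup {i | i ≤ ν.length ∧ (ν.take i).count true = k}

def bmin (ν : List Bool) : List ℕ :=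
  (List.range (ν.length + 1)).map fun i => (ν.take i).count true

def IsBracketVector (ν : List Bool) (b : List ℕ) : Prop :=
  b.length = ν.length + 1 ∧
    (∀ k ≤ northSteps ν, b.getD (fpos ν k) 0 = k) ∧
    (∀ i < b.length, (bmin ν).getD i 0 ≤ b.getD i 0 ∧ b.getD i 0 ≤ northSteps ν) ∧
    ∀ i j k, i < j → j < k → k < b.length →
      ¬(b.getD i 0 = b.getD k 0 ∧ b.getD i 0 < b.getD j 0)

noncomputable def leftChild (T : Set (ℕ × ℕ)) (p : ℕ × ℕ) : Option (ℕ × ℕ) :=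
  if ∃ b, (p.1, b) ∈ T ∧ b < p.2 then some (p.1, sSup {b | (p.1, b) ∈ T ∧ b < p.2})
  else none

noncomputable def rightChild (T : Set (ℕ × ℕ)) (p : ℕ × ℕ) : Option (ℕ × ℕ) :=
  if ∃ a, (a, p.2) ∈ T ∧ p.1 < a then
    if ∃ b, (sInf {a | (a, p.2) ∈ T ∧ p.1 < a}, b) ∈ T ∧ p.2 < b then none
    else some (sInf {a | (a, p.2) ∈ T ∧ p.1 < a}, p.2)
  else none

noncomputable def inorderAux (T : Set (ℕ × ℕ)) : ℕ → ℕ × ℕ → List (ℕ × ℕ)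
  | 0, _ => []
  | fuel + 1, p =>
    (match leftChild T p with
      | none => []
      | some l => inorderAux T fuel l) ++ p ::
      (match rightChild T p with
        | none => []
        | some r => inorderAux T fuel r)

/-- Bracket vector of a ν-tree: y-coordinates read in in-order from the root `(0,n)`. -/
noncomputable def bracketOfTree (ν : List Bool) (T : Set (ℕ × ℕ)) : List ℕ :=
  (inorderAux T T.ncard (0, northSteps ν)).map Prod.snd

noncomputable def bracketAssign (ν μ : List Bool) : List (ℕ × ℕ) :=
  ((List.range (northSteps ν + 1)).foldl
    (fun (st : List (ℕ × ℕ) × List ℕ) k =>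
      let picked := ((st.2.filter fun i => decide (i ≤ fpos ν k)).reverse).take
        (pointsAtHeight μ k)
      (st.1 ++ picked.map fun i => (i, k), st.2.filter fun i => decide (i ∉ picked)))
    ([], List.range (ν.length + 1))).1

/-- Bracket vector of a ν-path. -/
noncomputable def bracketOfPath (ν μ : List Bool) : List ℕ :=
  (List.range (ν.length + 1)).map fun i => ((bracketAssign ν μ).lookup i).getD 0

/-- Componentwise order on (equal length) integer vectors. -/
def listLE (b b' : List ℕ) : Prop :=
  b.length = b'.length ∧ ∀ i, b.getD i 0 ≤ b'.getD i 0

/-! Reversal -/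

def revPath (ν : List Bool) : List Bool := ν.reverse.map fun s => !s

def revTree (ν : List Bool) (T : Set (ℕ × ℕ)) : Set (ℕ × ℕ) :=
  (fun p : ℕ × ℕ => (northSteps ν - p.2, eastSteps ν - p.1)) '' T

/-! Pipe dreams and subword complexes -/

def dOf (ν : List Bool) (p : ℕ × ℕ) : ℕ := p.1 + (northSteps ν - p.2)

def labelPerm (ν : List Bool) (p : ℕ × ℕ) : Equiv.Perm ℕ :=
  Equiv.swap (dOf ν p + 1) (dOf ν p + 2)

/-- The points of `A_ν` in reading order: rows from bottom to top, each left to right. -/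
def readingList (ν : List Bool) : List (ℕ × ℕ) :=
  ((List.range (northSteps ν + 1)).map fun y =>
    ((List.range (eastSteps ν + 1)).filter fun x => decide (heightAt ν x ≤ y)).map
      fun x => (x, y)).flatten

/-- The minimal ν-tree. -/
def TminSet (ν : List Bool) : Set (ℕ × ℕ) :=
  {p | p ∈ APts ν ∧ (p.1 = 0 ∨ ∃ i < ν.length, ν.getD i true = false ∧ p = pointAt ν (i + 1))}

noncomputable def prodOver (ν : List Bool) (C : Set (ℕ × ℕ)) : Equiv.Perm ℕ :=
  (((readingList ν).filter fun p => decide (p ∈ C)).map (labelPerm ν)).prod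

/-- Coxeter length: number of inversions. -/
noncomputable def lenInv (π : Equiv.Perm ℕ) : ℕ :=
  {q : ℕ × ℕ | q.1 < q.2 ∧ π q.2 < π q.1}.ncard

noncomputable def piNu (ν : List Bool) : Equiv.Perm ℕ := prodOver ν (APts ν \ TminSet ν)

def Qword (ν : List Bool) : List (Equiv.Perm ℕ) := (readingList ν).map (labelPerm ν)

noncomputable def prodAt (Q : List (Equiv.Perm ℕ)) (P : Finset ℕ) : Equiv.Perm ℕ :=
  (((List.range Q.length).filter fun i => decide (i ∈ P)).map fun i => Q.getD i 1).prod

def IsFacet (Q : List (Equiv.Perm ℕ)) (π : Equiv.Perm ℕ) (I : Finset ℕ) : Prop :=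
  I ⊆ Finset.range Q.length ∧
    prodAt Q (Finset.range Q.length \ I) = π ∧
    (Finset.range Q.length \ I).card = lenInv π

def IncFlip (Q : List (Equiv.Perm ℕ)) (π : Equiv.Perm ℕ) (I J : Finset ℕ) : Prop :=
  IsFacet Q π I ∧ IsFacet Q π J ∧ ∃ i ∈ I, ∃ j ∈ J, i < j ∧ I.erase i = J.erase j

def FlipLE (Q : List (Equiv.Perm ℕ)) (π : Equiv.Perm ℕ) : Finset ℕ → Finset ℕ → Prop :=
  Relation.ReflTransGen (IncFlip Q π)

/-- The maximal ν-tree. -/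
def TmaxSet (ν : List Bool) : Set (ℕ × ℕ) :=
  {p | (p.1 ≤ eastSteps ν ∧ p.2 = northSteps ν) ∨ ∃ i < ν.length, ν.getD i false = true ∧ p = pointAt ν i}

/-! ### Auxiliary material for the proof -/

theorem heightAt_zero (ν : List Bool) : heightAt ν 0 = 0 := by
  cases ν with
  | nil => rfl
  | cons a l => cases a <;> rfl

theorem heightAt_le (ν : List Bool) : ∀ x, heightAt ν x ≤ northSteps ν := by
  induction ν with
  | nil => intro x; cases x <;> simp [heightAt]
  | cons s l ih =>
    intro x
    cases x with
    | zero => simp [heightAt_zero]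
    | succ x =>
      cases s
      · have := ih x
        simp only [northSteps, heightAt] at *
        simpa using this
      · have := ih (x + 1)
        simp only [northSteps, heightAt] at *
        simpa using this

theorem heightAt_mono (ν : List Bool) :
    ∀ a b, a ≤ b → b ≤ eastSteps ν → heightAt ν a ≤ heightAt ν b := by
  induction ν with
  | nil =>
    intro a b hab hb
    have : b = 0 := by simpa [eastSteps] using hb
    have : a = b := by omega
    rw [this]
  | cons s l ih =>
    intro a b hab hb
    cases a with
    | zero => simp [heightAt_zero]
    | succ a =>
      cases b with
      | zero => omega
      | succ b =>
        cases s
        · have := ih a b (by omega) (by simp [eastSteps] at *; omega)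
          simpa [heightAt] using this
        · have := ih (a + 1) (b + 1) (by omega) (by simp [eastSteps] at *; omega)
          simpa [heightAt] using this

/-- Compatible subsets of a staircase. -/
structure Comp (m n : ℕ) (h : ℕ → ℕ) (T : Set (ℕ × ℕ)) : Prop where
  sub : ∀ x y, (x, y) ∈ T → x ≤ m ∧ h x ≤ y ∧ y ≤ n
  comp : ∀ x y a b, (x, y) ∈ T → (a, b) ∈ T → x < a → y < b → h a ≤ y → False

/-- Maximal compatible subsets of a staircase. -/
structure Tr (m n : ℕ) (h : ℕ → ℕ) (T : Set (ℕ × ℕ)) : Prop extends Comp m n h T where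
  ins : ∀ x y, x ≤ m → h x ≤ y → y ≤ n →
    (∀ a b, (a, b) ∈ T → ¬ (x < a ∧ y < b ∧ h a ≤ y) ∧ ¬ (a < x ∧ b < y ∧ h x ≤ b)) →
    (x, y) ∈ T

/-- Staircase shape. -/
structure Stair (m n : ℕ) (h : ℕ → ℕ) : Prop where
  zero : h 0 = 0
  le : ∀ x, h x ≤ n
  mono : ∀ a b, a ≤ b → b ≤ m → h a ≤ h b

theorem stair_of (ν : List Bool) : Stair (eastSteps ν) (northSteps ν) (heightAt ν) :=
  ⟨heightAt_zero ν, heightAt_le ν, heightAt_mono ν⟩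

theorem comp_iff (ν : List Bool) (T : Set (ℕ × ℕ)) :
    Comp (eastSteps ν) (northSteps ν) (heightAt ν) T ↔
      T ⊆ APts ν ∧ T.Pairwise (Compatible ν) := by
  constructor
  · intro H
    refine ⟨fun p hp => H.sub p.1 p.2 hp, ?_⟩
    rintro ⟨x, y⟩ hp ⟨a, b⟩ hq _ hI
    rcases hI with ⟨h1, h2, h3⟩ | ⟨h1, h2, h3⟩
    · exact H.comp x y a b hp hq h1 h2 h3.2.1
    · exact H.comp a b x y hq hp h1 h2 h3.2.1
  · rintro ⟨hs, hc⟩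
    refine ⟨fun x y hp => hs hp, ?_⟩
    intro x y a b hp hq h1 h2 h3
    refine hc hp hq (by intro he; simp at he; omega) (Or.inl ⟨h1, h2, (hs hq).1, h3, (hs hp).2.2⟩)

theorem tr_of {ν : List Bool} {T : Set (ℕ × ℕ)} (hT : IsNuTree ν T) :
    Tr (eastSteps ν) (northSteps ν) (heightAt ν) T := by
  obtain ⟨hs, hc, hm⟩ := hT
  have hC := (comp_iff ν T).2 ⟨hs, hc⟩
  refine ⟨hC, ?_⟩
  intro x y hx hy hn hall
  have key := hm (insert (x, y) T) ?_ ?_ (Set.subset_insert _ _)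
  · rw [← key]; exact Set.mem_insert _ _
  · exact Set.insert_subset ⟨hx, hy, hn⟩ hs
  · refine ((comp_iff ν _).1 ⟨?_, ?_⟩).2
    · rintro a b (he | he)
      · simp at he; obtain ⟨rfl, rfl⟩ := he; exact ⟨hx, hy, hn⟩
      · exact hC.sub a b he
    · rintro a b c d (he | he) (he' | he') h1 h2 h3
      · simp at he he'; omega
      · simp at he; obtain ⟨rfl, rfl⟩ := he
        exact (hall c d he').1 ⟨h1, h2, h3⟩
      · simp at he'; obtain ⟨rfl, rfl⟩ := he'
        exact (hall a b he).2 ⟨h1, h2, h3⟩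
      · exact hC.comp a b c d he he' h1 h2 h3

section
variable {m n : ℕ} {h : ℕ → ℕ} {T : Set (ℕ × ℕ)}

theorem Tr.root (hS : Stair m n h) (hT : Tr m n h T) : (0, n) ∈ T := by
  refine hT.ins 0 n (by omega) (hS.le 0) le_rfl ?_
  intro a b hab
  have := hT.sub a b hab
  omega

theorem Tr.col (hS : Stair m n h) (hT : Tr m n h T) {x : ℕ} (hx0 : 0 < x) (hx : x ≤ m) :
    ∃ y a, a < x ∧ (x, y) ∈ T ∧ (a, y) ∈ T := by
  have hex : ∃ b, ∃ a, a < x ∧ h x ≤ b ∧ (a, b) ∈ T := ⟨n, 0, hx0, hS.le x, hT.root hS⟩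
  obtain ⟨a, ha, hb, hab⟩ := Nat.find_spec hex
  have hmin := fun b => Nat.find_min' hex (m := b)
  generalize Nat.find hex = b at *
  refine ⟨b, a, ha, ?_, hab⟩
  have hs := hT.sub a b hab
  refine hT.ins x b hx hb hs.2.2 ?_
  intro a' b' hab'
  constructor
  · rintro ⟨h1, h2, h3⟩
    exact hT.comp a b a' b' hab hab' (by omega) h2 h3
  · rintro ⟨h1, h2, h3⟩
    have := hmin b' ⟨a', h1, h3, hab'⟩
    omega

theorem Tr.row (hS : Stair m n h) (hT : Tr m n h T) {y : ℕ} (hy : y < n) :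
    ∃ x b, y < b ∧ (x, y) ∈ T ∧ (x, b) ∈ T := by
  have hex : ∃ k, ∃ a b, k + a = m ∧ y < b ∧ h a ≤ y ∧ (a, b) ∈ T :=
    ⟨m, 0, n, by omega, hy, by rw [hS.zero]; omega, hT.root hS⟩
  obtain ⟨a, b, hk, hb, ha, hab⟩ := Nat.find_spec hex
  have hmin := fun b => Nat.find_min' hex (m := b)
  generalize Nat.find hex = k at *
  refine ⟨a, b, hb, ?_, hab⟩
  have hs := hT.sub a b hab
  refine hT.ins a y hs.1 ha (by omega) ?_
  intro a' b' hab'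
  have hs' := hT.sub a' b' hab'
  constructor
  · rintro ⟨h1, h2, h3⟩
    have := hmin (m - a') ⟨a', b', by omega, h2, h3, hab'⟩
    omega
  · rintro ⟨h1, h2, h3⟩
    exact hT.comp a' b' a b hab' hab h1 (by omega) h3

/-- A node with a left neighbour has nothing above. -/
theorem Comp.noAbove (hT : Comp m n h T) {a x y b : ℕ} (hax : a < x) (h1 : (a, y) ∈ T)
    (h2 : (x, y) ∈ T) (h3 : (x, b) ∈ T) : b ≤ y := by
  by_contra hb
  exact hT.comp a y x b h1 h3 hax (by omega) (hT.sub x y h2).2.1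

theorem Tr.claimB (hS : Stair m n h) (hT : Tr m n h T) {x y : ℕ} (hxy : (x, y) ∈ T) :
    ∀ a, x < a → a ≤ m → h a ≤ y → (∀ a', x < a' → a' ≤ a → (a', y) ∉ T) →
      ∃ y1, y1 < y ∧ (x, y1) ∈ T ∧ h a ≤ y1 := by
  intro a
  induction a using Nat.strong_induction_on with
  | _ a ih =>
    intro hxa ham hay hno
    obtain ⟨t, a', haa, hat, hat'⟩ := hT.col hS (by omega : 0 < a) ham
    have hs := hT.sub _ _ hat
    rcases lt_trichotomy t y with hty | hty | hty
    · rcases lt_trichotomy a' x with hx' | hx' | hx'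
      · have := hS.mono x a (by omega) ham
        exact (hT.comp _ _ _ _ hat' hxy hx' hty (by omega)).elim
      · subst hx'
        exact ⟨t, hty, hat', hs.2.1⟩
      · have hm' := hS.mono a' a (by omega) ham
        obtain ⟨y1, h1, h2, h3⟩ := ih a' haa hx' (by omega) (by omega)
          (fun a'' g1 g2 => hno a'' g1 (by omega))
        refine ⟨y1, h1, h2, ?_⟩
        by_contra hc
        exact hT.comp _ _ _ _ h2 hat' hx' (by omega) h3
    · subst hty
      exact (hno a hxa le_rfl hat).elim
    · exact (hT.comp _ _ _ _ hxy hat hxa hty hay).elim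

theorem Tr.claimC (hS : Stair m n h) (hT : Tr m n h T) {x y : ℕ} (hxy : (x, y) ∈ T) :
    ∀ k b, b + k = y → b < y → h x ≤ b → (∀ b', b ≤ b' → b' < y → (x, b') ∉ T) →
      ∃ x2, x < x2 ∧ (x2, y) ∈ T ∧ h x2 ≤ b := by
  intro k
  induction k using Nat.strong_induction_on with
  | _ k ih =>
    intro b hbk hby hxb hno
    have hs := hT.sub _ _ hxy
    obtain ⟨a', b', hbb, hat, hat'⟩ := hT.row hS (by omega : b < n)
    have hs' := hT.sub _ _ hat
    rcases lt_trichotomy a' x with hx' | hx' | hx'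
    · exact (hT.comp _ _ _ _ hat hxy hx' hby hxb).elim
    · subst hx'
      exact (hno b le_rfl hby hat).elim
    · rcases lt_trichotomy b' y with hty | hty | hty
      · obtain ⟨x2, h1, h2, h3⟩ := ih (y - b') (by omega) b' (by omega) hty (by omega)
          (fun b'' g1 g2 => hno b'' (by omega) g2)
        refine ⟨x2, h1, h2, ?_⟩
        have : x2 ≤ a' := by
          by_contra hc
          exact hT.comp _ _ _ _ hat' h2 (by omega) hty h3
        have := hS.mono x2 a' this hs'.1
        omega
      · subst hty
        exact ⟨a', hx', hat', by omega⟩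
      · exact (hT.comp _ _ _ _ hxy hat' hx' hty (by omega)).elim

/-- Last abscissa of the row `y`. -/
def mx (m : ℕ) (h : ℕ → ℕ) (y : ℕ) : ℕ := Nat.findGreatest (fun a => h a ≤ y) m

theorem mx_le (m : ℕ) (h : ℕ → ℕ) (y : ℕ) : mx m h y ≤ m := Nat.findGreatest_le m

theorem h_mx (hS : Stair m n h) (y : ℕ) : h (mx m h y) ≤ y :=
  Nat.findGreatest_spec (P := fun a => h a ≤ y) (Nat.zero_le m) (by simp [hS.zero])

theorem le_mx {a y : ℕ} (ha : a ≤ m) (hh : h a ≤ y) : a ≤ mx m h y :=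
  Nat.le_findGreatest ha hh

theorem mx_eq (hS : Stair m n h) {a y : ℕ} (ha : a ≤ m) (hh : h a ≤ y)
    (hno : a < m → y < h (a + 1)) : mx m h y = a := by
  refine le_antisymm ?_ (le_mx ha hh)
  by_contra hc
  have h1 := mx_le m h y
  have h2 := h_mx hS y
  have := hS.mono (a + 1) (mx m h y) (by omega) h1
  have := hno (by omega)
  omega

theorem mx_mono (hS : Stair m n h) {y y' : ℕ} (hy : y ≤ y') : mx m h y ≤ mx m h y' :=
  le_mx (mx_le _ _ _) ((h_mx hS y).trans hy)

/-- top of a column -/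
noncomputable def tp (T : Set (ℕ × ℕ)) (c : ℕ) : ℕ := sSup {y | (c, y) ∈ T}

theorem tp_eq {c y : ℕ} (h1 : (c, y) ∈ T) (h2 : ∀ b, (c, b) ∈ T → b ≤ y) : tp T c = y :=
  IsGreatest.csSup_eq (s := {y | (c, y) ∈ T}) ⟨h1, fun b hb => h2 b hb⟩

theorem Comp.le_tp (hT : Comp m n h T) {c y : ℕ} (h1 : (c, y) ∈ T) : y ≤ tp T c :=
  le_csSup (s := {y | (c, y) ∈ T}) ⟨n, fun _ hb => (hT.sub _ _ hb).2.2⟩ h1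

theorem Comp.tp_mem' (hT : Comp m n h T) {c y : ℕ} (h1 : (c, y) ∈ T) : (c, tp T c) ∈ T :=
  Nat.sSup_mem (s := {y | (c, y) ∈ T}) ⟨y, h1⟩ ⟨n, fun _ hb => (hT.sub _ _ hb).2.2⟩

theorem Tr.tp_mem (hS : Stair m n h) (hT : Tr m n h T) {c : ℕ} (hc : c ≤ m) :
    (c, tp T c) ∈ T := by
  rcases Nat.eq_zero_or_pos c with rfl | h0
  · exact hT.tp_mem' (hT.root hS)
  · obtain ⟨y, a, h1, h2, h3⟩ := hT.col hS h0 hc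
    exact hT.tp_mem' h2

theorem Comp.tp_left (hT : Comp m n h T) {a x y : ℕ} (hax : a < x) (h1 : (a, y) ∈ T)
    (h2 : (x, y) ∈ T) : tp T x = y :=
  tp_eq h2 fun _ hb => hT.noAbove hax h1 h2 hb

/-! Geometric case analysis. -/

theorem Tr.caseLR (hS : Stair m n h) (hT : Tr m n h T) {x y y1 x2 : ℕ} (hp : (x, y) ∈ T)
    (hl : (x, y1) ∈ T) (hy1 : y1 < y) (hno : ∀ b, y1 < b → b < y → (x, b) ∉ T)
    (hr : (x2, y) ∈ T) (hx2 : x < x2) (hno2 : ∀ a, x < a → a < x2 → (a, y) ∉ T) :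
    mx m h y1 + 1 = x2 ∧ h x2 = y1 + 1 := by
  have sl := hT.sub _ _ hl
  have sr := hT.sub _ _ hr
  have h1 : y1 < h x2 := by
    by_contra hc
    exact hT.comp _ _ _ _ hl hr hx2 hy1 (by omega)
  have h2 : h x2 ≤ y1 + 1 := by
    rcases Nat.lt_or_ge (y1 + 1) y with hlt | hge
    · obtain ⟨x2', g1, g2, g3⟩ := hT.claimC hS hp (y - (y1 + 1)) (y1 + 1) (by omega) hlt
        (by omega) (fun b' g1 g2 => hno b' (by omega) g2)
      have : x2 ≤ x2' := by
        by_contra hc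
        exact hno2 x2' g1 (by omega) g2
      have := hS.mono x2 x2' this (hT.sub _ _ g2).1
      omega
    · omega
  have h3 : h (x2 - 1) ≤ y1 := by
    rcases Nat.lt_or_ge x (x2 - 1) with hlt | hge
    · have := hS.mono (x2 - 1) x2 (by omega) sr.1
      obtain ⟨y1', g1, g2, g3⟩ := hT.claimB hS hp (x2 - 1) hlt (by omega) (by omega)
        (fun a' g1 g2 => hno2 a' g1 (by omega))
      have : y1' ≤ y1 := by
        by_contra hc
        exact hno y1' (by omega) g1 g2
      omega
    · have : x2 - 1 = x := by omega
      rw [this]; exact sl.2.1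
  refine ⟨?_, by omega⟩
  have := mx_eq hS (a := x2 - 1) (y := y1) (by omega) h3 (fun _ => by
    rwa [show x2 - 1 + 1 = x2 by omega])
  omega

theorem Tr.caseL (hS : Stair m n h) (hT : Tr m n h T) {x y y1 : ℕ} (hp : (x, y) ∈ T)
    (hl : (x, y1) ∈ T) (hy1 : y1 < y) (hno : ∀ b, y1 < b → b < y → (x, b) ∉ T)
    (hno2 : ∀ a, x < a → (a, y) ∉ T) :
    y1 + 1 = y ∧ mx m h y1 = mx m h y := by
  have sl := hT.sub _ _ hl
  constructor
  · by_contra hc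
    obtain ⟨x2', g1, g2, g3⟩ := hT.claimC hS hp (y - (y1 + 1)) (y1 + 1) (by omega) (by omega)
        (by omega) (fun b' g1 g2 => hno b' (by omega) g2)
    exact hno2 _ g1 g2
  · refine le_antisymm (mx_mono hS hy1.le) ?_
    refine le_mx (mx_le _ _ _) ?_
    rcases Nat.lt_or_ge x (mx m h y) with hlt | hge
    · obtain ⟨y1', g1, g2, g3⟩ := hT.claimB hS hp (mx m h y) hlt (mx_le _ _ _) (h_mx hS y)
        (fun a' g1 g2 => hno2 a' g1)
      have : y1' ≤ y1 := by
        by_contra hc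
        exact hno y1' (by omega) g1 g2
      omega
    · have := hS.mono _ _ hge sl.1
      omega

theorem Tr.caseR (hS : Stair m n h) (hT : Tr m n h T) {x y x2 : ℕ} (hp : (x, y) ∈ T)
    (hno : ∀ b, b < y → (x, b) ∉ T)
    (hr : (x2, y) ∈ T) (hx2 : x < x2) (hno2 : ∀ a, x < a → a < x2 → (a, y) ∉ T) :
    x2 = x + 1 ∧ h x2 = h x := by
  have sp := hT.sub _ _ hp
  have sr := hT.sub _ _ hr
  have h0 : x2 = x + 1 := by
    by_contra hc
    have := hS.mono (x + 1) x2 (by omega) sr.1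
    obtain ⟨y1', g1, g2, g3⟩ := hT.claimB hS hp (x + 1) (by omega) (by omega) (by omega)
      (fun a' g1 g2 => hno2 a' g1 (by omega))
    exact hno _ g1 g2
  refine ⟨h0, le_antisymm ?_ (hS.mono _ _ hx2.le sr.1)⟩
  rcases Nat.lt_or_ge (h x) y with hlt | hge
  · obtain ⟨x2', g1, g2, g3⟩ := hT.claimC hS hp (y - h x) (h x) (by omega) hlt le_rfl
      (fun b' g1 g2 => hno b' g2)
    have := hS.mono x2 x2' (by omega) (hT.sub _ _ g2).1
    omega
  · omega

theorem Tr.caseN (hS : Stair m n h) (hT : Tr m n h T) {x y : ℕ} (hp : (x, y) ∈ T)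
    (hno : ∀ b, b < y → (x, b) ∉ T) (hno2 : ∀ a, x < a → (a, y) ∉ T) :
    mx m h y = x ∧ h x = y := by
  have sp := hT.sub _ _ hp
  constructor
  · refine mx_eq hS sp.1 sp.2.1 fun hlt => ?_
    by_contra hc
    obtain ⟨y1', g1, g2, g3⟩ := hT.claimB hS hp (x + 1) (by omega) (by omega) (by omega)
      (fun a' g1 g2 => hno2 a' g1)
    exact hno _ g1 g2
  · by_contra hc
    obtain ⟨x2', g1, g2, g3⟩ := hT.claimC hS hp (y - h x) (h x) (by omega) (by omega) le_rfl
      (fun b' g1 g2 => hno b' g2)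
    exact hno2 _ g1 g2

/-! The explicit form of the bracket vector. -/

/-- Entry of the bracket vector at position `i`. -/
noncomputable def bet (m : ℕ) (h : ℕ → ℕ) (T : Set (ℕ × ℕ)) (i : ℕ) : ℕ :=
  if ∃ c, 0 < c ∧ c ≤ m ∧ i + 1 = c + h c then
    tp T (sSup {c | 0 < c ∧ c ≤ m ∧ i + 1 = c + h c})
  else sSup {y | i = y + mx m h y}

theorem bet_col (hS : Stair m n h) {c i : ℕ} (h0 : 0 < c) (hc : c ≤ m) (hi : i + 1 = c + h c) :
    bet m h T i = tp T c := by
  have : {c | 0 < c ∧ c ≤ m ∧ i + 1 = c + h c} = {c} := by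
    ext d
    simp only [Set.mem_ofPred_eq, Set.mem_singleton_iff]
    constructor
    · rintro ⟨g0, g1, g2⟩
      rcases lt_trichotomy d c with hh | hh | hh
      · have := hS.mono d c hh.le hc; omega
      · exact hh
      · have := hS.mono c d hh.le g1; omega
    · rintro rfl; exact ⟨h0, hc, hi⟩
  rw [bet, if_pos ⟨c, h0, hc, hi⟩, this, csSup_singleton]

theorem bet_row (hS : Stair m n h) {y i : ℕ} (hi : i = y + mx m h y) :
    bet m h T i = y := by
  have : {y | i = y + mx m h y} = {y} := by
    ext d
    simp only [Set.mem_ofPred_eq, Set.mem_singleton_iff]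
    constructor
    · intro g
      rcases lt_trichotomy d y with hh | hh | hh
      · have := mx_mono hS hh.le; omega
      · exact hh
      · have := mx_mono hS hh.le; omega
    · rintro rfl; exact hi
  rw [bet, if_neg, this, csSup_singleton]
  rintro ⟨c, g0, g1, g2⟩
  rcases Nat.lt_or_ge y (h c) with hh | hh
  · have : mx m h y < c := by
      by_contra hc
      have := hS.mono c _ (not_lt.1 hc) (mx_le _ _ _)
      have := h_mx hS y
      omega
    omega
  · have := le_mx g1 hh
    omega

theorem leftChild_none {x y : ℕ} (hno : ∀ b, b < y → (x, b) ∉ T) : leftChild T (x, y) = none := by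
  rw [leftChild, if_neg]
  rintro ⟨b, h1, h2⟩
  exact hno b h2 h1

theorem leftChild_some {x y y1 : ℕ} (hl : (x, y1) ∈ T) (hy1 : y1 < y)
    (hno : ∀ b, y1 < b → b < y → (x, b) ∉ T) : leftChild T (x, y) = some (x, y1) := by
  rw [leftChild, if_pos ⟨y1, hl, hy1⟩]
  have : sSup {b | (x, b) ∈ T ∧ b < y} = y1 := by
    refine IsGreatest.csSup_eq ⟨⟨hl, hy1⟩, ?_⟩
    rintro b ⟨h1, h2⟩
    by_contra hc
    exact hno b (by omega) h2 h1
  simp only [this]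

theorem rightChild_none {x y : ℕ} (hno : ∀ a, x < a → (a, y) ∉ T) :
    rightChild T (x, y) = none := by
  rw [rightChild, if_neg]
  rintro ⟨b, h1, h2⟩
  exact hno b h2 h1

theorem rightChild_some (hT : Comp m n h T) {x y x2 : ℕ} (hp : (x, y) ∈ T) (hl : (x2, y) ∈ T)
    (hx2 : x < x2) (hno : ∀ a, x < a → a < x2 → (a, y) ∉ T) :
    rightChild T (x, y) = some (x2, y) := by
  rw [rightChild, if_pos ⟨x2, hl, hx2⟩]
  have : sInf {a | (a, y) ∈ T ∧ x < a} = x2 := by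
    refine IsLeast.csInf_eq ⟨⟨hl, hx2⟩, ?_⟩
    rintro b ⟨h1, h2⟩
    by_contra hc
    exact hno b h2 (by omega) h1
  simp only [this]
  rw [if_neg]
  rintro ⟨b, h1, h2⟩
  have := hT.noAbove hx2 hp hl h1
  omega

theorem Comp.exL (hT : Comp m n h T) (x y : ℕ) :
    (∀ b, b < y → (x, b) ∉ T) ∨
      ∃ y1, (x, y1) ∈ T ∧ y1 < y ∧ ∀ b, y1 < b → b < y → (x, b) ∉ T := by
  by_cases hex : ∃ b, b < y ∧ (x, b) ∈ T
  · right
    obtain ⟨b, hb⟩ := hex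
    have hbdd : BddAbove {b | b < y ∧ (x, b) ∈ T} := ⟨y, fun _ hb => hb.1.le⟩
    have h1 := Nat.sSup_mem (s := {b | b < y ∧ (x, b) ∈ T}) ⟨b, hb⟩ hbdd
    refine ⟨_, h1.2, h1.1, fun c hc hcy hcT => ?_⟩
    have := le_csSup hbdd (show c ∈ {b | b < y ∧ (x, b) ∈ T} from ⟨hcy, hcT⟩)
    omega
  · left
    intro b hb hT
    exact hex ⟨b, hb, hT⟩

theorem exR (T : Set (ℕ × ℕ)) (x y : ℕ) :
    (∀ a, x < a → (a, y) ∉ T) ∨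
      ∃ x2, (x2, y) ∈ T ∧ x < x2 ∧ ∀ a, x < a → a < x2 → (a, y) ∉ T := by
  by_cases hex : ∃ a, x < a ∧ (a, y) ∈ T
  · right
    have h1 := Nat.find_spec hex
    refine ⟨_, h1.2, h1.1, fun c hc hcy hcT => ?_⟩
    exact Nat.find_min hex hcy ⟨hc, hcT⟩
  · left
    intro b hb hT
    exact hex ⟨b, hb, hT⟩

theorem splice (f : ℕ → ℕ) {s p e : ℕ} (h1 : s ≤ p) (h2 : p ≤ e) :
    (List.range' s (e + 1 - s)).map f =
      (List.range' s (p - s)).map f ++ f p :: (List.range' (p + 1) (e - p)).map f := by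
  have e1 : List.range' s (e + 1 - s) =
      List.range' s (p - s) ++ p :: List.range' (p + 1) (e - p) := by
    have := List.range'_append_1 (s := s) (m := p - s) (n := e + 1 - p)
    rw [show p - s + (e + 1 - p) = e + 1 - s by omega, show s + (p - s) = p by omega] at this
    rw [← this, show e + 1 - p = (e - p) + 1 by omega, List.range'_succ]
  rw [e1]; simp

theorem inorder_eq (hS : Stair m n h) (hT : Tr m n h T) :
    ∀ fuel x y, (x, y) ∈ T → y + (m - x) + 1 ≤ fuel →
      (x + h x ≤ y + mx m h y) ∧
      (inorderAux T fuel (x, y)).map Prod.snd =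
        (List.range' (x + h x) (y + mx m h y + 1 - (x + h x))).map (bet m h T) := by
  intro fuel
  induction fuel with
  | zero => intro x y _ hf; omega
  | succ fuel ih =>
    intro x y hp hf
    have sp := hT.sub _ _ hp
    rcases hT.exL x y with hl | ⟨y1, hl, hy1, hnl⟩ <;>
      rcases exR T x y with hr | ⟨x2, hr, hx2, hnr⟩
    · obtain ⟨g1, g2⟩ := hT.caseN hS hp hl hr
      refine ⟨by omega, ?_⟩
      rw [splice (bet m h T) (p := y + mx m h y) (by omega) (by omega), bet_row hS rfl]
      simp only [inorderAux, leftChild_none hl, rightChild_none hr]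
      simp [g1, g2, Nat.add_comm]
    · obtain ⟨g1, g2⟩ := hT.caseR hS hp hl hr hx2 hnr
      have sr := hT.sub _ _ hr
      obtain ⟨i1, i2⟩ := ih x2 y hr (by omega)
      refine ⟨by omega, ?_⟩
      rw [splice (bet m h T) (p := x + h x) (by omega) (by omega),
        bet_col hS (c := x2) (by omega) sr.1 (by omega), hT.tp_left hx2 hp hr]
      simp only [inorderAux, leftChild_none hl, rightChild_some hT.toComp hp hr hx2 hnr]
      simp only [List.nil_append, List.map_cons, i2]
      rw [show x2 + h x2 = x + h x + 1 by omega]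
      simp
    · obtain ⟨g1, g2⟩ := hT.caseL hS hp hl hy1 hnl hr
      obtain ⟨i1, i2⟩ := ih x y1 hl (by omega)
      refine ⟨by omega, ?_⟩
      rw [splice (bet m h T) (p := y + mx m h y) (by omega) (by omega), bet_row hS rfl]
      simp only [inorderAux, leftChild_some hl hy1 hnl, rightChild_none hr]
      simp only [List.map_append, List.map_cons, i2]
      rw [show y1 + mx m h y1 + 1 = y + mx m h y by omega]
      simp
    · obtain ⟨g1, g2⟩ := hT.caseLR hS hp hl hy1 hnl hr hx2 hnr
      have sr := hT.sub _ _ hr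
      obtain ⟨i1, i2⟩ := ih x y1 hl (by omega)
      obtain ⟨j1, j2⟩ := ih x2 y hr (by omega)
      refine ⟨by omega, ?_⟩
      rw [splice (bet m h T) (p := y1 + mx m h y1 + 1) (by omega) (by omega),
        bet_col hS (c := x2) (by omega) sr.1 (by omega), hT.tp_left hx2 hp hr]
      simp only [inorderAux, leftChild_some hl hy1 hnl, rightChild_some hT.toComp hp hr hx2 hnr]
      simp only [List.map_append, List.map_cons, i2, j2]
      rw [show x2 + h x2 = y1 + mx m h y1 + 1 + 1 by omega]
      simp

/-! Cardinality. -/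

theorem Comp.finite (hT : Comp m n h T) : T.Finite := by
  refine ((Set.finite_Iic m).prod (Set.finite_Iic n)).subset ?_
  rintro ⟨x, y⟩ hp
  have := hT.sub _ _ hp
  exact ⟨this.1, this.2.2⟩

theorem Comp.ncard_le (hT : Comp m n h T) : T.ncard ≤ m + n + 1 := by
  have key : T.ncard ≤ (Set.Iio (m + n + 1)).ncard := by
    refine Set.ncard_le_ncard_of_injOn
      (fun p => if ∃ b, p.2 < b ∧ (p.1, b) ∈ T then m + 1 + p.2 else p.1) ?_ ?_
      (Set.finite_Iio _)
    · rintro ⟨x, y⟩ hp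
      have sp := hT.sub _ _ hp
      simp only [Set.mem_Iio]
      split_ifs with hc
      · obtain ⟨b, g1, g2⟩ := hc
        have := hT.sub _ _ g2
        try simp only at *
        omega
      · omega
    · rintro ⟨x, y⟩ hp ⟨a, b⟩ hq heq
      have sp := hT.sub _ _ hp
      have sq := hT.sub _ _ hq
      simp only at heq
      split_ifs at heq with c1 c2 c2
      · have : y = b := by omega
        subst this
        obtain ⟨d1, e1, e2⟩ := c1
        obtain ⟨d2, f1, f2⟩ := c2
        simp only at *
        rcases lt_trichotomy x a with hh | hh | hh
        · have := hT.noAbove hh hp hq f2; omega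
        · rw [hh]
        · have := hT.noAbove hh hq hp e2; omega
      · omega
      · omega
      · subst heq
        try simp only at *
        rcases lt_trichotomy y b with hh | hh | hh
        · exact (c1 ⟨b, hh, hq⟩).elim
        · rw [hh]
        · exact (c2 ⟨y, hh, hp⟩).elim
  simpa using key

theorem Tr.le_ncard (hS : Stair m n h) (hT : Tr m n h T) : m + n + 1 ≤ T.ncard := by
  have hrow : ∀ y, ∃ x, y < n → ∃ b, y < b ∧ (x, y) ∈ T ∧ (x, b) ∈ T := by
    intro y
    by_cases hy : y < n
    · obtain ⟨x, b, hh⟩ := hT.row hS hy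
      exact ⟨x, fun _ => ⟨b, hh⟩⟩
    · exact ⟨0, fun hh => (hy hh).elim⟩
  choose r hr using hrow
  have key : (Set.Iio (m + n + 1)).ncard ≤ T.ncard := by
    refine Set.ncard_le_ncard_of_injOn
      (fun i => if i ≤ m then (i, tp T i) else (r (i - (m + 1)), i - (m + 1))) ?_ ?_ hT.finite
    · intro i hi
      simp only [Set.mem_Iio] at hi
      try simp only
      split_ifs with hc
      · exact hT.tp_mem hS hc
      · obtain ⟨b, _, g, _⟩ := hr (i - (m + 1)) (by omega)
        exact g
    · intro i hi j hj heq
      simp only [Set.mem_Iio] at hi hj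
      simp only at heq
      split_ifs at heq with c1 c2 c2
      · simpa using (Prod.mk.inj heq).1
      · obtain ⟨e1, e2⟩ := Prod.mk.inj heq
        obtain ⟨b, g1, g2, g3⟩ := hr (j - (m + 1)) (by omega)
        rw [← e1] at g3
        have := hT.le_tp g3
        omega
      · obtain ⟨e1, e2⟩ := Prod.mk.inj heq
        obtain ⟨b, g1, g2, g3⟩ := hr (i - (m + 1)) (by omega)
        rw [e1] at g3
        have := hT.le_tp g3
        omega
      · obtain ⟨e1, e2⟩ := Prod.mk.inj heq
        omega
  simpa using key

end

theorem bracket_eq {ν : List Bool} {T : Set (ℕ × ℕ)} (hT : IsNuTree ν T) :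
    bracketOfTree ν T =
      (List.range (eastSteps ν + northSteps ν + 1)).map (bet (eastSteps ν) (heightAt ν) T) := by
  have hS := stair_of ν
  have hTr := tr_of hT
  have hc := hTr.le_ncard hS
  have := (inorder_eq hS hTr T.ncard 0 (northSteps ν) (hTr.root hS) (by omega)).2
  rw [bracketOfTree, this, hS.zero, mx_eq hS le_rfl (hS.le _) (fun hh => by omega),
    List.range_eq_range']
  congr 2
  omega

theorem bet_cover {m n : ℕ} {h : ℕ → ℕ} (_hS : Stair m n h) (T T' : Set (ℕ × ℕ)) (i : ℕ) :
    (∃ c, 0 < c ∧ c ≤ m ∧ i + 1 = c + h c) ∨ bet m h T i = bet m h T' i := by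
  by_cases hc : ∃ c, 0 < c ∧ c ≤ m ∧ i + 1 = c + h c
  · exact Or.inl hc
  · right; rw [bet, bet, if_neg hc, if_neg hc]

theorem listLE_iff {ν : List Bool} {T T' : Set (ℕ × ℕ)} (hT : IsNuTree ν T)
    (hT' : IsNuTree ν T') :
    listLE (bracketOfTree ν T) (bracketOfTree ν T') ↔
      ∀ c, 0 < c → c ≤ eastSteps ν → tp T c ≤ tp T' c := by
  have hS := stair_of ν
  rw [bracket_eq hT, bracket_eq hT', listLE]
  constructor
  · rintro ⟨_, hle⟩ c h0 hc
    have := hle (c + heightAt ν c - 1)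
    have hb := hS.le c
    have hlt : c + heightAt ν c - 1 < eastSteps ν + northSteps ν + 1 := by omega
    simp only [List.getD_eq_getElem?_getD, List.getElem?_map, List.getElem?_range hlt,
      Option.map_some, Option.getD_some] at this
    rwa [bet_col hS h0 hc (by omega), bet_col hS h0 hc (by omega)] at this
  · intro hle
    refine ⟨by simp, fun i => ?_⟩
    by_cases hi : i < eastSteps ν + northSteps ν + 1
    · simp only [List.getD_eq_getElem?_getD, List.getElem?_map, List.getElem?_range hi,
        Option.map_some, Option.getD_some]
      rcases bet_cover hS T T' i with ⟨c, h0, hc, hh⟩ | hh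
      · rw [bet_col hS h0 hc hh, bet_col hS h0 hc hh]
        exact hle c h0 hc
      · exact hh.le
    · simp [List.getD_eq_getElem?_getD, List.getElem?_map,
        List.getElem?_eq_none (l := List.range (eastSteps ν + northSteps ν + 1)) (i := i)
          (by simpa using hi)]

/-- Effect of a rotation on column tops. -/
theorem rot_tp {m n : ℕ} {h : ℕ → ℕ} {T S : Set (ℕ × ℕ)} (hS : Stair m n h) (hT : Tr m n h T)
    {x y x2 y' : ℕ} (hx : x < x2) (hy : y < y') (hq : (x, y) ∈ T) (hp : (x, y') ∈ T)
    (hr : (x2, y) ∈ T) (hE : S = (T \ {(x, y)}) ∪ {(x2, y')}) :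
    tp T x2 = y ∧ tp S x2 = y' ∧ ∀ c, c ≤ m → c ≠ x2 → tp S c = tp T c := by
  have h1 := hT.tp_left hx hq hr
  refine ⟨h1, ?_, ?_⟩
  · refine tp_eq (by rw [hE]; simp) ?_
    intro b hb
    rw [hE] at hb
    rcases hb with hb | hb
    · have := hT.le_tp hb.1
      omega
    · simp at hb; omega
  · intro c hc hcx
    refine tp_eq ?_ ?_
    · rw [hE]
      refine Or.inl ⟨hT.tp_mem hS hc, ?_⟩
      intro he
      simp only [Set.mem_singleton_iff, Prod.mk.injEq] at he
      obtain ⟨rfl, he⟩ := he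
      have := hT.le_tp hp
      omega
    · intro b hb
      rw [hE] at hb
      rcases hb with hb | hb
      · exact hT.le_tp hb.1
      · simp at hb; omega

theorem rot_tree {ν : List Bool} {T S : Set (ℕ × ℕ)} (hT : IsNuTree ν T)
    {x y x2 y' : ℕ} (hx : x < x2) (hy : y < y') (hq : (x, y) ∈ T) (hp : (x, y') ∈ T)
    (hr : (x2, y) ∈ T) (hno : ∀ b, y < b → b < y' → (x, b) ∉ T)
    (hno2 : ∀ a, x < a → a < x2 → (a, y) ∉ T) (hE : S = (T \ {(x, y)}) ∪ {(x2, y')}) :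
    IsNuTree ν S := by
  have hS := stair_of ν
  have hTr := tr_of hT
  have sp := hTr.sub _ _ hp
  have sr := hTr.sub _ _ hr
  have hcomp : Comp (eastSteps ν) (northSteps ν) (heightAt ν) S := by
    subst hE
    constructor
    · rintro a b (hab | hab)
      · exact hTr.sub _ _ hab.1
      · simp only [Set.mem_singleton_iff, Prod.mk.injEq] at hab
        obtain ⟨rfl, rfl⟩ := hab
        omega
    · rintro a b c d (hab | hab) (hcd | hcd) g1 g2 g3
      · exact hTr.comp _ _ _ _ hab.1 hcd.1 g1 g2 g3
      · simp only [Set.mem_singleton_iff, Prod.mk.injEq] at hcd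
        obtain ⟨rfl, rfl⟩ := hcd
        obtain ⟨hab, hne⟩ := hab
        have hxh := hS.mono x c hx.le sr.1
        rcases lt_trichotomy b y with hb | hb | hb
        · exact hTr.comp _ _ _ _ hab hr g1 hb g3
        · subst hb
          rcases lt_trichotomy a x with ha | ha | ha
          · exact hTr.comp _ _ _ _ hab hp ha g2 (by omega)
          · subst ha; exact hne rfl
          · exact hno2 a ha g1 hab
        · rcases lt_trichotomy a x with ha | ha | ha
          · exact hTr.comp _ _ _ _ hab hp ha g2 (by omega)
          · subst ha; exact hno b hb g2 hab
          · have := hS.mono a c g1.le sr.1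
            exact hTr.comp _ _ _ _ hq hab ha hb (by omega)
      · simp only [Set.mem_singleton_iff, Prod.mk.injEq] at hab
        obtain ⟨rfl, rfl⟩ := hab
        exact hTr.comp _ _ _ _ hp hcd.1 (by omega) g2 g3
      · simp at hab hcd; omega
  have hnot : (x2, y') ∉ T := fun hh => by
    have := hTr.noAbove hx hq hr hh; omega
  have hcard : S.ncard = T.ncard := by
    have e1 : S = insert (x2, y') (T \ {(x, y)}) := by rw [hE, Set.union_singleton]
    rw [e1]
    exact Set.ncard_exchange hnot hq
  obtain ⟨c1, c2⟩ := (comp_iff ν S).1 hcomp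
  refine ⟨c1, c2, ?_⟩
  intro S' d1 d2 hsub
  have hC' := (comp_iff ν S').2 ⟨d1, d2⟩
  have l1 := hC'.ncard_le
  have l2 := hTr.le_ncard hS
  exact (Set.eq_of_subset_of_ncard_le hsub (by omega) hC'.finite).symm

theorem eq_of_tp {ν : List Bool} {T T' : Set (ℕ × ℕ)} (hT : IsNuTree ν T)
    (hT' : IsNuTree ν T') (he : ∀ c, c ≤ eastSteps ν → tp T c = tp T' c) : T = T' := by
  have hS := stair_of ν
  have hTr := tr_of hT
  have hTr' := tr_of hT'
  refine (hT.2.2 T' hT'.1 hT'.2.1 ?_).symm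
  rintro ⟨x, y⟩ hp
  have sp := hTr.sub _ _ hp
  refine hTr'.ins x y sp.1 sp.2.1 sp.2.2 ?_
  intro a b hab
  have sa := hTr'.sub _ _ hab
  constructor
  · rintro ⟨g1, g2, g3⟩
    have := hTr'.le_tp hab
    rw [← he a sa.1] at this
    exact hTr.comp _ _ _ _ hp (hTr.tp_mem hS sa.1) g1 (by omega) g3
  · rintro ⟨g1, g2, g3⟩
    have := hTr.le_tp hp
    rw [he x sp.1] at this
    exact hTr'.comp _ _ _ _ hab (hTr'.tp_mem hS sp.1) g1 (by omega) g3

theorem tp_zero {ν : List Bool} {T : Set (ℕ × ℕ)} (hT : IsNuTree ν T) :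
    tp T 0 = northSteps ν :=
  tp_eq ((tr_of hT).root (stair_of ν)) fun _ hb => ((tr_of hT).sub _ _ hb).2.2

/-- A single rotation that stays below the target. -/
theorem exists_rot {ν : List Bool} {T T' : Set (ℕ × ℕ)} (hT : IsNuTree ν T)
    (hT' : IsNuTree ν T') (hle : ∀ c, c ≤ eastSteps ν → tp T c ≤ tp T' c) (hne : T ≠ T') :
    ∃ S c, IsNuTree ν S ∧ IsRightRotation T S ∧ c ≤ eastSteps ν ∧ tp T c < tp S c ∧
      tp S c ≤ tp T' c ∧ ∀ d, d ≤ eastSteps ν → d ≠ c → tp S d = tp T d := by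
  have hS := stair_of ν
  have hTr := tr_of hT
  have hTr' := tr_of hT'
  have hex : ∃ c, c ≤ eastSteps ν ∧ tp T c < tp T' c := by
    by_contra hcon
    push Not at hcon
    exact hne (eq_of_tp hT hT' fun c hc => le_antisymm (hle c hc) (hcon c hc))
  -- maximal value
  have hex2 : ∃ k c, c ≤ eastSteps ν ∧ tp T c < tp T' c ∧ tp T c + k = northSteps ν := by
    obtain ⟨c, h1, h2⟩ := hex
    have := (hTr.sub _ _ (hTr.tp_mem hS h1)).2.2
    exact ⟨northSteps ν - tp T c, c, h1, h2, by omega⟩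
  have hex3 := Nat.find_spec hex2
  have hmaxk := fun k => Nat.find_min' hex2 (m := k)
  generalize Nat.find hex2 = k at *
  obtain ⟨c1, c2, hk⟩ := Nat.find_spec hex3
  have hminc := fun d => Nat.find_min' hex3 (m := d)
  generalize Nat.find hex3 = c at *
  have c0 : 0 < c := by
    rcases Nat.eq_zero_or_pos c with rfl | h0
    · rw [tp_zero hT, tp_zero hT'] at c2; omega
    · exact h0
  obtain ⟨y, a, hac, hcy, hay⟩ := hTr.col hS c0 c1
  have htc := hTr.tp_left hac hay hcy
  have scy := hTr.sub _ _ hcy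
  -- nearest left neighbour
  obtain ⟨x, hxc, hq, hnr⟩ : ∃ x, x < c ∧ (x, y) ∈ T ∧ ∀ a, x < a → a < c → (a, y) ∉ T := by
    have hbdd : BddAbove {a | a < c ∧ (a, y) ∈ T} := ⟨c, fun _ hb => hb.1.le⟩
    have h1 := Nat.sSup_mem (s := {a | a < c ∧ (a, y) ∈ T}) ⟨a, hac, hay⟩ hbdd
    refine ⟨_, h1.1, h1.2, fun d hd hdc hdT => ?_⟩
    have := le_csSup hbdd (show d ∈ {a | a < c ∧ (a, y) ∈ T} from ⟨hdc, hdT⟩)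
    omega
  have sq := hTr.sub _ _ hq
  have hc' := hTr'.tp_mem hS c1
  -- node above
  have hab : ∃ b, y < b ∧ (x, b) ∈ T := by
    by_contra hcon
    push Not at hcon
    have htx : tp T x = y := tp_eq hq fun b hb => by
      by_contra hh
      exact hcon b (by omega) hb
    have h1 := hle x sq.1
    rcases Nat.lt_or_ge (tp T x) (tp T' x) with hh | hh
    · have := hminc x ⟨sq.1, hh, by omega⟩
      omega
    · have hx' := hTr'.tp_mem hS sq.1
      exact hTr'.comp _ _ _ _ hx' hc' hxc (by omega) (by omega)
  obtain ⟨y', hyy, hp, hna⟩ : ∃ y', y < y' ∧ (x, y') ∈ T ∧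
      ∀ b, y < b → b < y' → (x, b) ∉ T := by
    have h1 := Nat.find_spec hab
    exact ⟨_, h1.1, h1.2, fun b hb hb' hbT => Nat.find_min hab hb' ⟨hb, hbT⟩⟩
  have sp := hTr.sub _ _ hp
  have hfin : y' ≤ tp T' c := by
    by_contra hcon
    rcases exR T x y' with hr | ⟨d, hr, hxd, hnr'⟩
    · have := (hTr.caseL hS hp hq hyy hna hr).1
      omega
    · obtain ⟨g1, g2⟩ := hTr.caseLR hS hp hq hyy hna hr hxd hnr'
      have sd := hTr.sub _ _ hr
      have htd := hTr.tp_left hxd hp hr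
      have hcd : c ≤ mx (eastSteps ν) (heightAt ν) y := le_mx c1 scy.2.1
      have htd' : tp T' d = y' := by
        by_contra hcc
        have := hle d sd.1
        have := hmaxk (northSteps ν - y') ⟨d, sd.1, by omega, by omega⟩
        omega
      have hd' := hTr'.tp_mem hS sd.1
      exact hTr'.comp _ _ _ _ hc' hd' (by omega) (by omega) (by omega)
  obtain ⟨e1, e2, e3⟩ := rot_tp hS hTr hxc hyy hq hp hcy rfl
  refine ⟨_, c, rot_tree hT hxc hyy hq hp hcy hna hnr rfl, ⟨(x, y), (c, y'), x, y, c, y', rfl, rfl,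
    hxc, hyy, hq, hp, hcy, hna, hnr, ?_, ?_, rfl⟩, c1, by omega, by omega, e3⟩
  · intro a' h1 h2 h3
    have := hS.mono a' c h2.le c1
    exact hTr.comp _ _ _ _ hq h3 h1 hyy (by omega)
  · intro b h1 h2 h3
    have := hTr.le_tp h3
    omega

theorem le_of_tp {ν : List Bool} {T' : Set (ℕ × ℕ)} (hT' : IsNuTree ν T') :
    ∀ k (T : Set (ℕ × ℕ)), IsNuTree ν T → (∀ c, c ≤ eastSteps ν → tp T c ≤ tp T' c) →
      ∑ c ∈ Finset.range (eastSteps ν + 1), (tp T' c - tp T c) ≤ k → TreeLE ν T T' := by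
  intro k
  induction k with
  | zero =>
    intro T hT hle hsum
    have hz : ∀ c, c ≤ eastSteps ν → tp T c = tp T' c := by
      intro c hc
      have h0 := Nat.le_zero.1 hsum
      rw [Finset.sum_eq_zero_iff] at h0
      have := h0 c (by simp; omega)
      have := hle c hc
      omega
    rw [eq_of_tp hT hT' hz]
    exact Relation.ReflTransGen.refl
  | succ k ih =>
    intro T hT hle hsum
    by_cases hne : T = T'
    · rw [hne]; exact Relation.ReflTransGen.refl
    obtain ⟨S, c, hSt, hrot, hc, h1, h2, h3⟩ := exists_rot hT hT' hle hne
    refine Relation.ReflTransGen.head ⟨hT, hSt, hrot⟩ (ih S hSt ?_ ?_)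
    · intro d hd
      by_cases hdc : d = c
      · rw [hdc]; exact h2
      · rw [h3 d hd hdc]; exact hle d hd
    · have : ∑ c ∈ Finset.range (eastSteps ν + 1), (tp T' c - tp S c) <
          ∑ c ∈ Finset.range (eastSteps ν + 1), (tp T' c - tp T c) := by
        refine Finset.sum_lt_sum ?_ ⟨c, by simp; omega, by omega⟩
        intro d hd
        by_cases hdc : d = c
        · subst hdc; omega
        · rw [h3 d (by simp at hd; omega) hdc]
      omega

theorem rot_le {ν : List Bool} {A B : Set (ℕ × ℕ)} (hA : IsNuTree ν A)
    (hr : IsRightRotation A B) :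
    (∀ c, c ≤ eastSteps ν → tp A c ≤ tp B c) ∧ ∃ c, 0 < c ∧ c ≤ eastSteps ν ∧ tp A c < tp B c := by
  obtain ⟨q, q', x, y, x2, y', _, _, hx, hy, hq, hp, hrr, _, _, _, _, hE⟩ := hr
  obtain ⟨e1, e2, e3⟩ := rot_tp (stair_of ν) (tr_of hA) hx hy hq hp hrr hE
  have sr := (tr_of hA).sub _ _ hrr
  refine ⟨fun c hc => ?_, x2, by omega, sr.1, by omega⟩
  by_cases hcx : c = x2
  · subst hcx; omega
  · rw [e3 c hc hcx]

theorem tp_of_le {ν : List Bool} {A B : Set (ℕ × ℕ)} (hr : TreeLE ν A B) :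
    ∀ c, c ≤ eastSteps ν → tp A c ≤ tp B c := by
  induction hr with
  | refl => intro c _; exact le_rfl
  | tail _ hbc ih =>
    intro c hc
    exact (ih c hc).trans ((rot_le hbc.1 hbc.2.2).1 c hc)

theorem rotations_iff_bracket_le (ν : List Bool) (T T' : Set (ℕ × ℕ))
    (hT : IsNuTree ν T) (hT' : IsNuTree ν T') :
    (TreeLE ν T T' ↔ listLE (bracketOfTree ν T) (bracketOfTree ν T')) ∧
    ((TreeLE ν T T' ∧ T ≠ T') ↔
      (listLE (bracketOfTree ν T) (bracketOfTree ν T') ∧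
        bracketOfTree ν T ≠ bracketOfTree ν T')) := by
  have key : TreeLE ν T T' ↔ listLE (bracketOfTree ν T) (bracketOfTree ν T') := by
    rw [listLE_iff hT hT']
    constructor
    · intro hr c _ hc
      exact tp_of_le hr c hc
    · intro hle
      refine le_of_tp hT' _ T hT ?_ le_rfl
      intro c hc
      rcases Nat.eq_zero_or_pos c with rfl | h0
      · rw [tp_zero hT, tp_zero hT']
      · exact hle c h0 hc
  refine ⟨key, ?_⟩
  constructor
  · rintro ⟨hr, hne⟩
    refine ⟨key.1 hr, fun heq => ?_⟩
    have hback : listLE (bracketOfTree ν T') (bracketOfTree ν T) := by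
      rw [heq]; exact ⟨rfl, fun _ => le_rfl⟩
    rw [listLE_iff hT' hT] at hback
    rcases Relation.ReflTransGen.cases_head hr with he | ⟨S, hTS, hST⟩
    · exact hne he
    · obtain ⟨c, h0, hc, hlt⟩ := (rot_le hTS.1 hTS.2.2).2
      have h1 := tp_of_le hST c hc
      have h2 := hback c h0 hc
      omega
  · rintro ⟨hle, hne⟩
    exact ⟨key.2 hle, fun he => hne (by rw [he])⟩
end

section
/- Let ν be a lattice path with m east and n north steps and ℓ = m+n. If b = (b₁,…,b_{ℓ+1}) and b' = (b'₁,…,b'_{ℓ+1}) are ν-bracket vectors, then their componentwise minimum (min{b₁,b'₁},…,min{b_{ℓ+1},b'_{ℓ+1}}) is again a ν-bracket vector, and it is the greatest lower bound (meet) of b and b' in the componentwise order on ν-bracket vectors. -/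
open scoped Classical

theorem aux_getD_zipWith (b b' : List ℕ) (h : b.length = b'.length) (i : ℕ) :
    (List.zipWith min b b').getD i 0 = min (b.getD i 0) (b'.getD i 0) := by
  by_cases hi : i < b.length
  · have hi' : i < b'.length := h ▸ hi
    simp [List.getD_eq_getElem?_getD, hi, hi']
  · have hi' : ¬ i < b'.length := h ▸ hi
    simp [List.getD_eq_getElem?_getD, hi, hi']

theorem aux_count_succ (ν : List Bool) (p : ℕ) :
    (ν.take (p + 1)).count true ≤ (ν.take p).count true + 1 := by
  rw [List.take_add_one, List.count_append]
  have h1 : (ν[p]?.toList).count true ≤ (ν[p]?.toList).length := List.count_le_length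
  have h2 : (ν[p]?.toList).length ≤ 1 := by cases ν[p]? <;> simp
  omega

theorem aux_exists (ν : List Bool) (k v d : ℕ) (hk : (ν.take k).count true ≤ v)
    (hv : v ≤ (ν.take (k + d)).count true) :
    ∃ p, k ≤ p ∧ p ≤ k + d ∧ (ν.take p).count true = v := by
  induction d with
  | zero => exact ⟨k, le_rfl, le_rfl, le_antisymm hk hv⟩
  | succ d ih =>
    by_cases h : v ≤ (ν.take (k + d)).count true
    · obtain ⟨p, h1, h2, h3⟩ := ih h
      exact ⟨p, h1, by omega, h3⟩
    · have := aux_count_succ ν (k + d)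
      exact ⟨k + (d + 1), by omega, le_rfl, by
        rw [← add_assoc] at hv ⊢
        omega⟩

theorem aux_le_fpos (ν : List Bool) (k v : ℕ) (hkl : k ≤ ν.length)
    (hk : (ν.take k).count true ≤ v) (hv : v ≤ northSteps ν) : k ≤ fpos ν v := by
  obtain ⟨p, h1, h2, h3⟩ := aux_exists ν k v (ν.length - k) hk (by
    rw [Nat.add_sub_cancel' hkl, List.take_length]; exact hv)
  refine h1.trans (le_csSup ⟨ν.length, fun i hi => hi.1⟩ ⟨by omega, h3⟩)

theorem aux_fpos_le (ν : List Bool) (v : ℕ) : fpos ν v ≤ ν.length :=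
  csSup_le' fun _ hi => hi.1

theorem aux_bmin (ν : List Bool) (i : ℕ) (hi : i ≤ ν.length) :
    (bmin ν).getD i 0 = (ν.take i).count true := by
  have : i < ν.length + 1 := by omega
  simp [bmin, List.getD_eq_getElem?_getD, this]

/-- The value at `i` propagates: entries between `i` and any `k` whose minimal value is
at most `b i` are bounded by `b i`. -/
theorem aux_bound (ν : List Bool) (b : List ℕ) (hb : IsBracketVector ν b) (i j k : ℕ)
    (hij : i < j) (hjk : j < k) (hk : k ≤ ν.length)
    (hm : (bmin ν).getD k 0 ≤ b.getD i 0) : b.getD j 0 ≤ b.getD i 0 := by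
  obtain ⟨hl, hf, hbd, hav⟩ := hb
  have hn := (hbd i (by omega)).2
  rw [aux_bmin ν k hk] at hm
  have hle := aux_le_fpos ν k _ hk hm hn
  have hfl := aux_fpos_le ν (b.getD i 0)
  have := hav i j (fpos ν (b.getD i 0)) hij (by omega) (by omega)
  rw [hf _ hn] at this
  by_contra hlt
  exact this ⟨rfl, by omega⟩

theorem bracket_meet_componentwise_min (ν : List Bool) (b b' : List ℕ)
    (hb : IsBracketVector ν b) (hb' : IsBracketVector ν b') :
    IsBracketVector ν (List.zipWith min b b') ∧
    listLE (List.zipWith min b b') b ∧ listLE (List.zipWith min b b') b' ∧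
    ∀ c, IsBracketVector ν c → listLE c b → listLE c b' →
      listLE c (List.zipWith min b b') := by
  obtain ⟨hl, hf, hbd, hav⟩ := id hb
  obtain ⟨hl', hf', hbd', hav'⟩ := id hb'
  have hg := aux_getD_zipWith b b' (hl.trans hl'.symm)
  have hlen : (List.zipWith min b b').length = ν.length + 1 := by simp [hl, hl']
  refine ⟨⟨hlen, ?_, ?_, ?_⟩, ⟨by omega, ?_⟩, ⟨by omega, ?_⟩, ?_⟩
  · intro k hk
    rw [hg, hf k hk, hf' k hk, min_self]
  · intro i hi
    have h1 := hbd i (by omega)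
    have h2 := hbd' i (by omega)
    rw [hg]
    omega
  · intro i j k hij hjk hk
    rw [hg, hg, hg]
    rintro ⟨h1, h2⟩
    have h3 := (hbd k (by omega)).1
    have h4 := (hbd' k (by omega)).1
    have h5 := aux_bound ν b hb i j k hij hjk (by omega)
    have h6 := aux_bound ν b' hb' i j k hij hjk (by omega)
    omega
  · intro i
    rw [hg]
    omega
  · intro i
    rw [hg]
    omega
  · intro c hc h1 h2
    refine ⟨by rw [hlen, hc.1], fun i => ?_⟩
    rw [hg]
    exact le_min (h1.2 i) (h2.2 i)
end

section
/- Let ν be a lattice path with m east and n north steps and let ←ν be the lattice path obtained by reading ν backwards and exchanging north and east steps. The reflection map T ↦ ←T := {(n−y, m−x) : (x,y) ∈ T} is an order-reversing bijection from the rotation lattice of ν-trees onto the rotation lattice of ←ν-trees, and consequently the join of two ν-trees T and T' in the rotation lattice of ν-trees satisfies T ∨ T' = ←(←T ∧ ←T'), where ∧ denotes the meet in the rotation lattice of ←ν-trees. -/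
open scoped Classical

/-! ### Helper lemmas -/

theorem heightAt_le_iff (ν : List Bool) : ∀ x y : ℕ, x ≤ ν.count false →
    (heightAt ν x ≤ y ↔ ∃ a b, ν = a ++ b ∧ x ≤ a.count false ∧ a.count true ≤ y) := by
  induction ν with
  | nil =>
    intro x y hx
    have : x = 0 := by simpa using hx
    subst this
    constructor
    · intro _; exact ⟨[], [], by simp⟩
    · intro _; simp [heightAt]
  | cons s rest ih =>
    intro x y hx
    cases x with
    | zero =>
      constructor
      · intro _; exact ⟨[], s :: rest, by simp⟩
      · intro _; simp [heightAt]
    | succ x =>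
      cases s with
      | true =>
        have hx' : x + 1 ≤ rest.count false := by simpa using hx
        simp only [heightAt]
        constructor
        · intro h
          obtain ⟨a, b, h1, h2, h3⟩ := (ih (x + 1) (y - 1) hx').1 (by omega)
          refine ⟨true :: a, b, by simp [h1], by simpa using h2, ?_⟩
          simp only [List.count_cons_self]; omega
        · rintro ⟨a, b, h1, h2, h3⟩
          cases a with
          | nil => simp at h2
          | cons t a =>
            simp only [List.cons_append, List.cons.injEq] at h1
            obtain ⟨rfl, h1⟩ := h1
            simp only [List.count_cons_self] at h3
            have := (ih (x + 1) (y - 1) hx').2 ⟨a, b, h1, by simpa using h2, by omega⟩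
            omega
      | false =>
        have hx' : x ≤ rest.count false := by simpa using hx
        simp only [heightAt]
        rw [ih x y hx']
        constructor
        · rintro ⟨a, b, h1, h2, h3⟩
          exact ⟨false :: a, b, by simp [h1], by simpa using h2, by simpa using h3⟩
        · rintro ⟨a, b, h1, h2, h3⟩
          cases a with
          | nil => simp at h2
          | cons t a =>
            simp only [List.cons_append, List.cons.injEq] at h1
            obtain ⟨rfl, h1⟩ := h1
            exact ⟨a, b, h1, by simpa using h2, by simpa using h3⟩

theorem count_false_revPath (ν : List Bool) : (revPath ν).count false = ν.count true := by
  induction ν with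
  | nil => rfl
  | cons s t ih => cases s <;> simp_all [revPath]

theorem count_true_revPath (ν : List Bool) : (revPath ν).count true = ν.count false := by
  induction ν with
  | nil => rfl
  | cons s t ih => cases s <;> simp_all [revPath]

theorem eastSteps_revPath (ν : List Bool) : eastSteps (revPath ν) = northSteps ν :=
  count_false_revPath ν

theorem northSteps_revPath (ν : List Bool) : northSteps (revPath ν) = eastSteps ν :=
  count_true_revPath ν

theorem revPath_revPath (ν : List Bool) : revPath (revPath ν) = ν := by
  simp [revPath, Function.comp_def]

theorem revPath_append (a b : List Bool) : revPath (a ++ b) = revPath b ++ revPath a := by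
  simp [revPath]

def rpt (ν : List Bool) (p : ℕ × ℕ) : ℕ × ℕ := (northSteps ν - p.2, eastSteps ν - p.1)

theorem rpt_mem {ν : List Bool} {p : ℕ × ℕ} (h : p ∈ APts ν) : rpt ν p ∈ APts (revPath ν) := by
  obtain ⟨h1, h2, h3⟩ := h
  obtain ⟨a, b, e, ha, hb⟩ := (heightAt_le_iff ν p.1 p.2 h1).1 h2
  refine ⟨?_, ?_, ?_⟩
  · rw [eastSteps_revPath]; simp [rpt]
  · refine (heightAt_le_iff _ _ _ ?_).2 ⟨revPath b, revPath a, ?_, ?_, ?_⟩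
    · rw [count_false_revPath]; simp [rpt, northSteps]
    · rw [← revPath_append, ← e]
    · rw [count_false_revPath]
      simp only [rpt, northSteps, e, List.count_append]; omega
    · rw [count_true_revPath]
      simp only [rpt, eastSteps, e, List.count_append]; omega
  · rw [northSteps_revPath]; simp [rpt]

theorem rpt_rpt {ν : List Bool} {p : ℕ × ℕ} (h : p ∈ APts ν) : rpt (revPath ν) (rpt ν p) = p := by
  obtain ⟨h1, h2, h3⟩ := h
  simp only [rpt, eastSteps_revPath, northSteps_revPath]
  ext <;> simp only <;> omega

theorem revTree_eq (ν : List Bool) (T : Set (ℕ × ℕ)) : revTree ν T = rpt ν '' T := rfl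

theorem revTree_subset {ν : List Bool} {T : Set (ℕ × ℕ)} (h : T ⊆ APts ν) :
    revTree ν T ⊆ APts (revPath ν) := by
  rintro _ ⟨p, hp, rfl⟩
  exact rpt_mem (h hp)

theorem revTree_revTree {ν : List Bool} {T : Set (ℕ × ℕ)} (h : T ⊆ APts ν) :
    revTree (revPath ν) (revTree ν T) = T := by
  ext p
  constructor
  · rintro ⟨_, ⟨q, hq, rfl⟩, rfl⟩
    have := rpt_rpt (h hq)
    simp only [rpt] at this
    simp only [this]; exact hq
  · intro hp
    exact ⟨_, ⟨p, hp, rfl⟩, rpt_rpt (h hp)⟩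

theorem revTree_revTree' {ν : List Bool} {T : Set (ℕ × ℕ)} (h : T ⊆ APts (revPath ν)) :
    revTree ν (revTree (revPath ν) T) = T := by
  have := revTree_revTree h
  rwa [revPath_revPath] at this

/-- Membership in the reflected set. -/
theorem mem_revTree {ν : List Bool} {T : Set (ℕ × ℕ)} (h : T ⊆ APts ν) {a b : ℕ}
    (ha : a ≤ northSteps ν) (hb : b ≤ eastSteps ν) :
    (a, b) ∈ revTree ν T ↔ (eastSteps ν - b, northSteps ν - a) ∈ T := by
  constructor
  · rintro ⟨p, hp, e⟩
    obtain ⟨h1, h2, h3⟩ := h hp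
    simp only [Prod.mk.injEq] at e
    have : p = (eastSteps ν - b, northSteps ν - a) := by
      ext <;> simp only <;> omega
    rwa [← this]
  · intro hp
    refine ⟨_, hp, ?_⟩
    ext <;> simp only <;> omega

theorem incompatible_of_rpt {ν : List Bool} {p q : ℕ × ℕ} (hp : p ∈ APts ν) (hq : q ∈ APts ν)
    (h : Incompatible (revPath ν) (rpt ν p) (rpt ν q)) : Incompatible ν p q := by
  obtain ⟨p1, p2⟩ := p
  obtain ⟨q1, q2⟩ := q
  obtain ⟨a1, a2, a3⟩ := hp
  obtain ⟨b1, b2, b3⟩ := hq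
  simp only at a1 a2 a3 b1 b2 b3
  rcases h with ⟨h1, h2, h3⟩ | ⟨h1, h2, h3⟩
  · right
    have := rpt_mem h3
    rw [revPath_revPath] at this
    simp only [rpt, eastSteps_revPath, northSteps_revPath] at *
    refine ⟨by omega, by omega, ?_⟩
    convert this using 2 <;> omega
  · left
    have := rpt_mem h3
    rw [revPath_revPath] at this
    simp only [rpt, eastSteps_revPath, northSteps_revPath] at *
    refine ⟨by omega, by omega, ?_⟩
    convert this using 2 <;> omega

theorem revTree_pairwise {ν : List Bool} {T : Set (ℕ × ℕ)} (h : T ⊆ APts ν)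
    (hT : T.Pairwise (Compatible ν)) : (revTree ν T).Pairwise (Compatible (revPath ν)) := by
  rintro _ ⟨p, hp, rfl⟩ _ ⟨q, hq, rfl⟩ hne hi
  have hpq : p ≠ q := by rintro rfl; exact hne rfl
  exact hT hp hq hpq (incompatible_of_rpt (h hp) (h hq) hi)

theorem revTree_isNuTree {ν : List Bool} {T : Set (ℕ × ℕ)} (h : IsNuTree ν T) :
    IsNuTree (revPath ν) (revTree ν T) := by
  obtain ⟨h1, h2, h3⟩ := h
  refine ⟨revTree_subset h1, revTree_pairwise h1 h2, ?_⟩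
  intro S s1 s2 s3
  have k1 := revTree_subset s1
  have k2 := revTree_pairwise s1 s2
  rw [revPath_revPath] at k1 k2
  have k3 : T ⊆ revTree (revPath ν) S := by
    rw [← revTree_revTree h1]
    exact Set.image_mono s3
  have := h3 _ k1 k2 k3
  rw [← this, revTree_revTree' s1]

theorem revTree_isNuTree' {ν : List Bool} {T : Set (ℕ × ℕ)} (h : IsNuTree (revPath ν) T) :
    IsNuTree ν (revTree (revPath ν) T) := by
  have := revTree_isNuTree h
  rwa [revPath_revPath] at this

theorem revTree_rotation {ν : List Bool} {T T' : Set (ℕ × ℕ)} (h : IsNuTree ν T)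
    (h' : IsNuTree ν T') (hr : IsRightRotation T T') :
    IsRightRotation (revTree ν T') (revTree ν T) := by
  obtain ⟨_, _, x, y, x', y', -, -, hx, hy, m1, m2, m3, e1, e2, e3, e4, rfl⟩ := hr
  have hn : (x', y') ∉ T := by
    intro hm
    refine h.2.1 m1 hm (by simp; omega) (Or.inl ⟨hx, hy, h.1 m3⟩)
  have n1 : (x', y') ∈ T \ {(x, y)} ∪ {(x', y')} := Or.inr rfl
  have n2 : (x, y') ∈ T \ {(x, y)} ∪ {(x', y')} := Or.inl ⟨m2, by simp; omega⟩
  have n3 : (x', y) ∈ T \ {(x, y)} ∪ {(x', y')} := Or.inl ⟨m3, by simp; omega⟩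
  have hback : T = (T \ {(x, y)} ∪ {(x', y')}) \ {(x', y')} ∪ {(x, y)} := by
    ext p
    by_cases hp1 : p = (x, y)
    · subst hp1; simp [m1]
    · by_cases hp2 : p = (x', y')
      · subst hp2; simp [hn]; omega
      · simp [hp1, hp2]
  set T' := T \ {(x, y)} ∪ {(x', y')} with hT'
  have key : ∀ p : ℕ × ℕ, p ∈ T' → p ∈ T ∨ p = (x', y') := by
    rintro p (hp | hp)
    · exact Or.inl hp.1
    · exact Or.inr hp
  obtain ⟨a1, -, a3⟩ := h'.1 n1
  simp only at a1 a3
  have inj : ∀ p ∈ APts ν, ∀ q ∈ APts ν, rpt ν p = rpt ν q → p = q := by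
    intro p hp q hq e
    rw [← rpt_rpt hp, e, rpt_rpt hq]
  refine ⟨_, _, northSteps ν - y', eastSteps ν - x', northSteps ν - y, eastSteps ν - x, rfl, rfl,
    by omega, by omega, ⟨_, n1, rfl⟩, ⟨_, n2, rfl⟩, ⟨_, n3, rfl⟩, ?_, ?_, ?_, ?_, ?_⟩
  · intro b b1 b2 hb
    rw [mem_revTree h'.1 (by omega) (by omega)] at hb
    rw [show northSteps ν - (northSteps ν - y') = y' by omega] at hb
    rcases key _ hb with hb | hb
    · exact e3 _ (by omega) (by omega) hb
    · simp only [Prod.mk.injEq] at hb; omega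
  · intro a b1 b2 hb
    rw [mem_revTree h'.1 (by omega) (by omega)] at hb
    rw [show eastSteps ν - (eastSteps ν - x') = x' by omega] at hb
    rcases key _ hb with hb | hb
    · exact e4 _ (by omega) (by omega) hb
    · simp only [Prod.mk.injEq] at hb; omega
  · intro a b1 b2 hb
    rw [mem_revTree h'.1 (by omega) (by omega)] at hb
    rw [show eastSteps ν - (eastSteps ν - x) = x by omega] at hb
    rcases key _ hb with hb | hb
    · exact e1 _ (by omega) (by omega) hb
    · simp only [Prod.mk.injEq] at hb; omega
  · intro b b1 b2 hb
    rw [mem_revTree h'.1 (by omega) (by omega)] at hb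
    rw [show northSteps ν - (northSteps ν - y) = y by omega] at hb
    rcases key _ hb with hb | hb
    · exact e2 _ (by omega) (by omega) hb
    · simp only [Prod.mk.injEq] at hb; omega
  · conv_lhs => rw [hback]
    change rpt ν '' _ = (rpt ν '' T') \ {rpt ν (x', y')} ∪ {rpt ν (x, y)}
    rw [Set.image_union, Set.image_singleton]
    congr 1
    ext p
    constructor
    · rintro ⟨q, ⟨hq, hq'⟩, rfl⟩
      refine ⟨⟨q, hq, rfl⟩, fun e => hq' (inj _ (h'.1 hq) _ (h'.1 n1) e)⟩
    · rintro ⟨⟨q, hq, rfl⟩, hne⟩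
      exact ⟨q, ⟨hq, fun e => hne (congrArg (rpt ν) e)⟩, rfl⟩

theorem revTree_le {ν : List Bool} {T T' : Set (ℕ × ℕ)} (h : TreeLE ν T T') :
    TreeLE (revPath ν) (revTree ν T') (revTree ν T) := by
  induction h with
  | refl => exact Relation.ReflTransGen.refl
  | tail _ hs ih =>
    exact Relation.ReflTransGen.head
      ⟨revTree_isNuTree hs.2.1, revTree_isNuTree hs.1, revTree_rotation hs.1 hs.2.1 hs.2.2⟩ ih

theorem revTree_le' {ν : List Bool} {T T' : Set (ℕ × ℕ)} (h : TreeLE (revPath ν) T T') :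
    TreeLE ν (revTree (revPath ν) T') (revTree (revPath ν) T) := by
  have := revTree_le h
  rwa [revPath_revPath] at this

theorem reflection_antiisomorphism_and_join (ν : List Bool) :
    Set.BijOn (revTree ν) {T | IsNuTree ν T} {T | IsNuTree (revPath ν) T} ∧
    (∀ T T', IsNuTree ν T → IsNuTree ν T' →
      (TreeLE ν T T' ↔ TreeLE (revPath ν) (revTree ν T') (revTree ν T))) ∧
    (∀ T T' M, IsNuTree ν T → IsNuTree ν T' → IsNuTree (revPath ν) M →
      (TreeLE (revPath ν) M (revTree ν T) ∧ TreeLE (revPath ν) M (revTree ν T') ∧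
        ∀ S, IsNuTree (revPath ν) S → TreeLE (revPath ν) S (revTree ν T) →
          TreeLE (revPath ν) S (revTree ν T') → TreeLE (revPath ν) S M) →
      (TreeLE ν T (revTree (revPath ν) M) ∧ TreeLE ν T' (revTree (revPath ν) M) ∧
        ∀ S, IsNuTree ν S → TreeLE ν T S → TreeLE ν T' S →
          TreeLE ν (revTree (revPath ν) M) S)) := by
  refine ⟨⟨fun T hT => revTree_isNuTree hT, ?_, ?_⟩, ?_, ?_⟩
  · intro T hT T' hT' e
    rw [← revTree_revTree hT.1, e, revTree_revTree hT'.1]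
  · intro S hS
    exact ⟨_, revTree_isNuTree' hS, revTree_revTree' hS.1⟩
  · intro T T' hT hT'
    refine ⟨revTree_le, fun h => ?_⟩
    have := revTree_le' h
    rwa [revTree_revTree hT.1, revTree_revTree hT'.1] at this
  · rintro T T' M hT hT' hM ⟨h1, h2, h3⟩
    refine ⟨?_, ?_, ?_⟩
    · have := revTree_le' h1
      rwa [revTree_revTree hT.1] at this
    · have := revTree_le' h2
      rwa [revTree_revTree hT'.1] at this
    · intro S hS s1 s2
      have := revTree_le' (h3 _ (revTree_isNuTree hS) (revTree_le s1) (revTree_le s2))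
      rwa [revTree_revTree hS.1] at this
end
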